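/- (Lemma 5.7 (i)) Let u : Θ → ℝ be bounded, n ≥ 1, and λ_i a fixed partition-jump datum. Then the function u^{n,λ_i} is Hölder continuous with exponent 2/(3p+3) in the time variable on (s_i, T], uniformly in the space variable: for all s, s' ∈ (s_i, T] and all x ∈ ℝ^d, |u^{n,λ_i}(s, x) − u^{n,λ_i}(s', x)| ≤ n |s − s'|^{2/(3p+3)}. -/

import Mathlib

open MeasureTheory Set Filter Topology

noncomputable section

/-- `ℝ^d` with the Euclidean norm. -/
abbrev E (d : ℕ) := EuclideanSpace ℝ (Fin d)

/-- A point `θ = (t, ω)` of `Θ = [0,T] × Ω`, where `Ω` is the set of continuous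
paths `[0,T] → ℝ^d` starting from the origin. -/
structure Theta (T : ℝ) (d : ℕ) where
  t : ℝ
  path : ℝ → E d
  ht : t ∈ Set.Icc 0 T
  cont : ContinuousOn path (Set.Icc 0 T)
  init : path 0 = 0

/-- `‖f‖_q^q := ‖f T‖^q + ∫_0^T ‖f s‖^q ds`. -/
def pnormPow (T q : ℝ) {d : ℕ} (f : ℝ → E d) : ℝ :=
  ‖f T‖ ^ q + ∫ s in (0:ℝ)..T, ‖f s‖ ^ q

/-- `‖f‖_q := (‖f T‖^q + ∫_0^T ‖f s‖^q ds)^(1/q)`. -/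
def pnorm (T q : ℝ) {d : ℕ} (f : ℝ → E d) : ℝ := (pnormPow T q f) ^ (1 / q)

/-- The pseudo-distance `d_p(θ,θ') = |t - t'| + ‖ω_{t∧·} - ω'_{t'∧·}‖_p`. -/
def dpDist (T p : ℝ) {d : ℕ} (θ θ' : Theta T d) : ℝ :=
  |θ.t - θ'.t| + pnorm T p (fun s => θ.path (min θ.t s) - θ'.path (min θ'.t s))

/-- The set `𝓛_{t,s}` of monotone time changes: for `s > 0`, nondecreasing
`ℓ : [0,T] → ℝ` restricting to an increasing bijection from `[0,t]` onto `[0,s]`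
with `ℓ(r) = r - t + s` on `(t,T]`; for `s = 0` the single function `ℓ^{t,0}`. -/
def LL (T t s : ℝ) : Set (ℝ → ℝ) :=
  if s = 0 then {fun r => if r ≤ t then 0 else r - t}
  else {ℓ | MonotoneOn ℓ (Set.Icc 0 T) ∧ StrictMonoOn ℓ (Set.Icc 0 t) ∧
        Set.BijOn ℓ (Set.Icc 0 t) (Set.Icc 0 s) ∧ ∀ r ∈ Set.Ioc t T, ℓ r = r - t + s}

/-- `‖ℓ - I‖_∞ := sup_{0 ≤ r ≤ T} |ℓ(r) - r|`. -/
def supId (T : ℝ) (ℓ : ℝ → ℝ) : ℝ := ⨆ r : Set.Icc (0:ℝ) T, |ℓ r - (r : ℝ)|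

/-- The penalization `Φ(s,η,θ,ℓ) := ‖ℓ - I‖_∞^{2/(3p+3)} + ‖η_{s∧ℓ(·)} - ω_{t∧·}‖_{p+1}^{p+1}`. -/
def Phi (T p : ℝ) {d : ℕ} (s : ℝ) (η : ℝ → E d) (θ : Theta T d) (ℓ : ℝ → ℝ) : ℝ :=
  (supId T ℓ) ^ (2 / (3 * p + 3)) +
    pnormPow T (p + 1) (fun r => η (min s (ℓ r)) - θ.path (min θ.t r))

/-- The regularization
`u^n(s,η) := sup { u(θ) - n Φ(s,η,θ,ℓ) : θ ∈ Θ \ {𝟎}, ℓ ∈ 𝓛_{t,s} }`. -/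
def reg (T p : ℝ) {d : ℕ} (u : Theta T d → ℝ) (n : ℕ) (s : ℝ) (η : ℝ → E d) : ℝ :=
  sSup { x | ∃ θ : Theta T d, ∃ ℓ : ℝ → ℝ, (θ.t, θ.path) ≠ (0, 0) ∧ ℓ ∈ LL T θ.t s ∧
        x = u θ - (n : ℝ) * Phi T p s η θ ℓ }

/-- A càdlàg path on `[0,T]`: right-continuous with left limits. -/
def Cadlag (T : ℝ) {d : ℕ} (η : ℝ → E d) : Prop :=
  (∀ x ∈ Set.Ico (0:ℝ) T, ContinuousWithinAt η (Set.Ici x) x) ∧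
  (∀ x ∈ Set.Ioc (0:ℝ) T, ∃ l : E d, Filter.Tendsto η (nhdsWithin x (Set.Iio x)) (𝓝 l))

/-- The piecewise constant path `η^{λ_i}(x)_s = Σ_j x_j 1_{{s ≥ s_j}}`. -/
def pcPath {d i : ℕ} (sVec : Fin i → ℝ) (xVec : Fin i → E d) : ℝ → E d :=
  fun r => ∑ j : Fin i, if sVec j ≤ r then xVec j else 0

def phiAux (a c y : ℝ) : ℝ := if y ≤ a then y else a + c * (y - a)

lemma phiAux_strictMono {a c : ℝ} (hc : 0 < c) : StrictMono (phiAux a c) := by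
  intro x y hxy
  unfold phiAux
  split_ifs with h1 h2 h2
  · exact hxy
  · have : 0 < c * (y - a) := mul_pos hc (by linarith)
    linarith
  · linarith
  · have : c * (x - a) < c * (y - a) := mul_lt_mul_of_pos_left (by linarith) hc
    linarith

lemma phiAux_le_iff {a c : ℝ} (hc : 0 < c) {b : ℝ} (hb : b ≤ a) (y : ℝ) :
    b ≤ phiAux a c y ↔ b ≤ y := by
  have h : phiAux a c b = b := if_pos hb
  conv_lhs => rw [← h]
  exact (phiAux_strictMono hc).le_iff_le

lemma phiAux_end {a s s' : ℝ} (hs : a < s) :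
    phiAux a ((s' - a) / (s - a)) s = s' := by
  unfold phiAux
  rw [if_neg (not_le.2 hs)]
  have : s - a ≠ 0 := by linarith
  field_simp
  ring

lemma phiAux_bijOn {a s s' : ℝ} (ha : 0 ≤ a) (hs : a < s) (hs' : a < s') :
    BijOn (phiAux a ((s' - a) / (s - a))) (Icc 0 s) (Icc 0 s') := by
  have hc : 0 < (s' - a) / (s - a) := div_pos (by linarith) (by linarith)
  have hm := phiAux_strictMono (a := a) hc
  refine ⟨?_, hm.injective.injOn, ?_⟩
  · intro y hy
    refine ⟨(phiAux_le_iff hc ha y).2 hy.1, ?_⟩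
    have := hm.monotone hy.2
    rwa [phiAux_end hs] at this
  · intro z hz
    by_cases h : z ≤ a
    · exact ⟨z, ⟨hz.1, by linarith⟩, if_pos h⟩
    · have hza : 0 < z - a := by linarith
      have h1 : 0 < s - a := by linarith
      have h2 : 0 < s' - a := by linarith
      have h3 : 0 < (z - a) * ((s - a) / (s' - a)) := by positivity
      have h4 : phiAux a ((s' - a) / (s - a)) (a + (z - a) * ((s - a) / (s' - a))) = z := by
        unfold phiAux
        rw [if_neg (by linarith)]
        field_simp
        ring
      refine ⟨a + (z - a) * ((s - a) / (s' - a)), ⟨by linarith, ?_⟩, h4⟩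
      rw [← hm.le_iff_le, h4, phiAux_end hs]
      exact hz.2

lemma phiAux_dist {a s s' y : ℝ} (hs : a < s) (hy : y ≤ s) :
    |phiAux a ((s' - a) / (s - a)) y - y| ≤ |s - s'| := by
  unfold phiAux
  split_ifs with h
  · simp
  · have h1 : 0 < s - a := by linarith
    have e : a + (s' - a) / (s - a) * (y - a) - y = (s' - s) * ((y - a) / (s - a)) := by
      field_simp
      ring
    have h0 : 0 ≤ (y - a) / (s - a) := div_nonneg (by linarith) h1.le
    have h2 : (y - a) / (s - a) ≤ 1 := (div_le_one h1).2 (by linarith)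
    rw [e, abs_mul, abs_of_nonneg h0, abs_sub_comm s s']
    exact mul_le_of_le_one_right (abs_nonneg _) h2

lemma pnormPow_nonneg' {T q : ℝ} (hT : 0 ≤ T) {d : ℕ} (f : ℝ → E d) : 0 ≤ pnormPow T q f := by
  unfold pnormPow
  have : 0 ≤ ∫ s in (0:ℝ)..T, ‖f s‖ ^ q :=
    intervalIntegral.integral_nonneg hT (fun _ _ => by positivity)
  positivity

lemma supId_nonneg' (T : ℝ) (ℓ : ℝ → ℝ) : 0 ≤ supId T ℓ :=
  Real.iSup_nonneg (fun _ => abs_nonneg _)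

lemma Phi_nonneg' {T p : ℝ} (hT : 0 ≤ T) {d : ℕ} (s : ℝ) (η : ℝ → E d) (θ : Theta T d)
    (ℓ : ℝ → ℝ) : 0 ≤ Phi T p s η θ ℓ :=
  add_nonneg (Real.rpow_nonneg (supId_nonneg' _ _) _) (pnormPow_nonneg' hT _)

lemma transfer {T : ℝ} (hT : 0 < T) {d : ℕ} {p : ℝ} (hp : 1 ≤ p) {a : ℝ} (ha : 0 ≤ a)
    (η : ℝ → E d) (hη1 : ∀ y, a ≤ y → η y = η a)
    (hη2 : ∀ c : ℝ, 0 < c → ∀ y, η (phiAux a c y) = η y)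
    {s s' : ℝ} (hs : a < s) (hs' : a < s') (θ : Theta T d) (ℓ : ℝ → ℝ) (hℓ : ℓ ∈ LL T θ.t s) :
    ∃ ℓ' ∈ LL T θ.t s',
      Phi T p s' η θ ℓ' ≤ Phi T p s η θ ℓ + |s - s'| ^ (2 / (3 * p + 3)) := by
  obtain ⟨ht0, htT⟩ := θ.ht
  unfold LL at hℓ ⊢
  rw [if_neg (by linarith)] at hℓ ⊢
  obtain ⟨hmono, hst, hbij, hlin⟩ := hℓ
  set t := θ.t with htdef
  set c := (s' - a) / (s - a) with hcdef
  have hc : 0 < c := div_pos (by linarith) (by linarith)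
  have hm := phiAux_strictMono (a := a) hc
  set ℓ' : ℝ → ℝ := fun r => if r ≤ t then phiAux a c (ℓ r) else r - t + s' with hℓ'
  have e1 : ∀ r, r ≤ t → ℓ' r = phiAux a c (ℓ r) := fun r hr => if_pos hr
  have e2 : ∀ r, t < r → ℓ' r = r - t + s' := fun r hr => if_neg (not_le.2 hr)
  have hb' : BijOn ℓ' (Icc 0 t) (Icc 0 s') :=
    ((phiAux_bijOn ha hs hs').comp hbij).congr (fun r hr => (e1 r hr.2).symm)
  have hst' : StrictMonoOn ℓ' (Icc 0 t) := by
    intro x hx y hy hxy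
    rw [e1 x hx.2, e1 y hy.2]
    exact hm (hst hx hy hxy)
  refine ⟨ℓ', ⟨?_, hst', hb', fun r hr => e2 r hr.1⟩, ?_⟩
  · intro x hx y hy hxy
    rcases le_or_gt y t with h | h
    · exact hst'.monotoneOn ⟨hx.1, hxy.trans h⟩ ⟨hy.1, h⟩ hxy
    · rw [e2 y h]
      rcases le_or_gt x t with h' | h'
      · have := (hb'.mapsTo ⟨hx.1, h'⟩).2
        linarith
      · rw [e2 x h']; linarith
  · have hbd : BddAbove (range fun r : Icc (0:ℝ) T => |ℓ r - (r : ℝ)|) := by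
      refine ⟨s + T + T, ?_⟩
      rintro _ ⟨r, rfl⟩
      obtain ⟨r, hr0, hrT⟩ := r
      simp only
      rw [abs_le]
      rcases le_or_gt r t with h | h
      · have := hbij.mapsTo ⟨hr0, h⟩
        constructor <;> linarith [this.1, this.2]
      · rw [hlin r ⟨h, hrT⟩]
        constructor <;> linarith
    have hsup : supId T ℓ' ≤ supId T ℓ + |s - s'| := by
      haveI : Nonempty (Icc (0:ℝ) T) := ⟨⟨0, le_rfl, hT.le⟩⟩
      refine ciSup_le ?_
      intro r
      have h1 : |ℓ r - (r:ℝ)| ≤ supId T ℓ := le_ciSup hbd r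
      have h2 : |ℓ' r - ℓ r| ≤ |s - s'| := by
        rcases le_or_gt (r:ℝ) t with h | h
        · rw [e1 _ h]
          exact phiAux_dist hs (hbij.mapsTo ⟨r.2.1, h⟩).2
        · rw [e2 _ h, hlin _ ⟨h, r.2.2⟩, abs_sub_comm s s']
          apply le_of_eq
          congr 1
          ring
      have h3 : |ℓ' r - (r:ℝ)| ≤ |ℓ' r - ℓ r| + |ℓ r - (r:ℝ)| := abs_sub_le _ _ _
      linarith
    have hα0 : 0 ≤ 2 / (3 * p + 3) := by positivity
    have hα1 : 2 / (3 * p + 3) ≤ 1 := by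
      rw [div_le_one (by linarith)]; linarith
    have hpow : supId T ℓ' ^ (2 / (3 * p + 3)) ≤
        supId T ℓ ^ (2 / (3 * p + 3)) + |s - s'| ^ (2 / (3 * p + 3)) :=
      (Real.rpow_le_rpow (supId_nonneg' _ _) hsup hα0).trans
        (Real.rpow_add_le_add_rpow (supId_nonneg' _ _) (abs_nonneg _) hα0 hα1)
    have hpt : ∀ r ∈ Icc (0:ℝ) T, η (min s' (ℓ' r)) = η (min s (ℓ r)) := by
      intro r hr
      rcases le_or_gt r t with h | h
      · rw [min_eq_right (hb'.mapsTo ⟨hr.1, h⟩).2, min_eq_right (hbij.mapsTo ⟨hr.1, h⟩).2,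
          e1 r h, hη2 c hc]
      · rw [e2 r h, hlin r ⟨h, hr.2⟩, hη1 _ (le_min hs'.le (by linarith)),
          hη1 _ (le_min hs.le (by linarith))]
    have hpn : pnormPow T (p + 1) (fun r => η (min s' (ℓ' r)) - θ.path (min θ.t r)) =
        pnormPow T (p + 1) (fun r => η (min s (ℓ r)) - θ.path (min θ.t r)) := by
      unfold pnormPow
      congr 1
      · simp only [hpt T ⟨hT.le, le_rfl⟩]
      · apply intervalIntegral.integral_congr
        intro r hr
        rw [uIcc_of_le hT.le] at hr
        simp only [hpt r hr]
    unfold Phi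
    rw [hpn]
    linarith

lemma reg_le {T : ℝ} (hT : 0 < T) {d : ℕ} {p : ℝ} (hp : 1 ≤ p) {a : ℝ} (ha : 0 ≤ a)
    (u : Theta T d → ℝ) (hub : ∃ M : ℝ, ∀ θ : Theta T d, |u θ| ≤ M) (n : ℕ)
    (η : ℝ → E d) (hη1 : ∀ y, a ≤ y → η y = η a)
    (hη2 : ∀ c : ℝ, 0 < c → ∀ y, η (phiAux a c y) = η y)
    {s s' : ℝ} (hs : a < s) (hs' : a < s') :
    reg T p u n s η - reg T p u n s' η ≤ (n : ℝ) * |s - s'| ^ (2 / (3 * p + 3)) := by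
  obtain ⟨M, hM⟩ := hub
  have hR : 0 ≤ (n : ℝ) * |s - s'| ^ (2 / (3 * p + 3)) := by positivity
  rw [sub_le_iff_le_add]
  by_cases hne : { x | ∃ θ : Theta T d, ∃ ℓ : ℝ → ℝ, (θ.t, θ.path) ≠ (0, 0) ∧ ℓ ∈ LL T θ.t s ∧
        x = u θ - (n : ℝ) * Phi T p s η θ ℓ }.Nonempty
  · refine csSup_le hne ?_
    rintro _ ⟨θ, ℓ, h0, hℓ, rfl⟩
    obtain ⟨ℓ', hℓ', hle⟩ := transfer hT hp ha η hη1 hη2 hs hs' θ ℓ hℓ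
    have : u θ - (n : ℝ) * Phi T p s' η θ ℓ' ≤ reg T p u n s' η := by
      refine le_csSup ⟨M, ?_⟩ ⟨θ, ℓ', h0, hℓ', rfl⟩
      rintro _ ⟨θ, ℓ, -, -, rfl⟩
      have h1 := (abs_le.1 (hM θ)).2
      have h2 : 0 ≤ (n : ℝ) * Phi T p s η θ ℓ :=
        mul_nonneg (Nat.cast_nonneg _) (Phi_nonneg' hT.le _ _ _ _)
      have h3 : 0 ≤ (n : ℝ) * Phi T p s' η θ ℓ :=
        mul_nonneg (Nat.cast_nonneg _) (Phi_nonneg' hT.le _ _ _ _)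
      linarith
    have h4 := mul_le_mul_of_nonneg_left hle (Nat.cast_nonneg (α := ℝ) n)
    rw [mul_add] at h4
    linarith
  · have he' : { x | ∃ θ : Theta T d, ∃ ℓ : ℝ → ℝ, (θ.t, θ.path) ≠ (0, 0) ∧ ℓ ∈ LL T θ.t s' ∧
        x = u θ - (n : ℝ) * Phi T p s' η θ ℓ } = ∅ := by
      rw [eq_empty_iff_forall_notMem]
      rintro _ ⟨θ, ℓ, h0, hℓ, rfl⟩
      obtain ⟨ℓ', hℓ', -⟩ := transfer hT hp ha η hη1 hη2 hs' hs θ ℓ hℓ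
      exact hne ⟨_, θ, ℓ', h0, hℓ', rfl⟩
    unfold reg
    rw [not_nonempty_iff_eq_empty.1 hne, he']
    simpa using hR

/-- (Lemma 5.7 (i)) For bounded `u`, the function `u^{n,λ_i}(·,x)` is
`2/(3p+3)`-Hölder in time on `(s_i, T]`, uniformly in `x`:
`|u^{n,λ_i}(s,x) - u^{n,λ_i}(s',x)| ≤ n |s - s'|^{2/(3p+3)}`.
Here `i = m+1`, `λ_i = ((s_1,…,s_i),(x_1,…,x_{i-1}))` and the path is
`η^{λ_i}(x) = pcPath sVec (Fin.snoc xs x)`. -/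
theorem stmt8 (T : ℝ) (hT : 0 < T) (d : ℕ) (hd : 1 ≤ d) (p : ℝ) (hp : 1 ≤ p)
    (u : Theta T d → ℝ) (hub : ∃ M : ℝ, ∀ θ : Theta T d, |u θ| ≤ M)
    (n : ℕ) (hn : 1 ≤ n)
    (m : ℕ) (sVec : Fin (m + 1) → ℝ) (hs0 : sVec 0 = 0) (hsmono : StrictMono sVec)
    (hsT : sVec (Fin.last m) ≤ T) (xs : Fin m → E d) :
    ∀ s ∈ Set.Ioc (sVec (Fin.last m)) T, ∀ s' ∈ Set.Ioc (sVec (Fin.last m)) T,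
    ∀ x : E d,
      |reg T p u n s (pcPath sVec (Fin.snoc xs x))
          - reg T p u n s' (pcPath sVec (Fin.snoc xs x))| ≤
        (n : ℝ) * |s - s'| ^ (2 / (3 * p + 3)) := by
  intro s hs s' hs' x
  have hle : ∀ j, sVec j ≤ sVec (Fin.last m) := fun j => hsmono.monotone (Fin.le_last j)
  have ha : 0 ≤ sVec (Fin.last m) := hs0 ▸ hle 0
  have h1 : ∀ y, sVec (Fin.last m) ≤ y → pcPath sVec (Fin.snoc xs x : Fin (m + 1) → E d) y =
      pcPath sVec (Fin.snoc xs x : Fin (m + 1) → E d) (sVec (Fin.last m)) := by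
    intro y hy
    unfold pcPath
    refine Finset.sum_congr rfl fun j _ => ?_
    rw [if_pos ((hle j).trans hy), if_pos (hle j)]
  have h2 : ∀ c : ℝ, 0 < c → ∀ y,
      pcPath sVec (Fin.snoc xs x : Fin (m + 1) → E d) (phiAux (sVec (Fin.last m)) c y) =
      pcPath sVec (Fin.snoc xs x : Fin (m + 1) → E d) y := by
    intro c hc y
    unfold pcPath
    refine Finset.sum_congr rfl fun j _ => ?_
    simp only [phiAux_le_iff hc (hle j) y]
  rw [abs_sub_le_iff]
  refine ⟨reg_le hT hp ha u hub n _ h1 h2 hs.1 hs'.1, ?_⟩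
  rw [abs_sub_comm s s']
  exact reg_le hT hp ha u hub n _ h1 h2 hs'.1 hs.1
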